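/- arXiv:2604.17537 — 3 statements merged into one kernel-verified Lean document; each statement's English description precedes it below -/
import Mathlib

section
/- Let n ≥ 1 and let p : ℝ → Fin n → ℝ be such that each p_i is differentiable at T₀, p_i(T) > 0 near T₀, and ∑_i p_i(T) = 1 near T₀. Define the purification Ψ(T) ∈ EuclideanSpace ℂ (Fin n × Fin n) by Ψ(T)_{(i,j)} = √(p_i(T)) if i = j and 0 otherwise, and the thermal state τ(T) = Matrix.diagonal (p(T)). Then the pure-state QFI of the purification equals the QFI of the thermal state: 4( ‖Ψ'(T₀)‖² − |⟨Ψ'(T₀), Ψ(T₀)⟩|² ) = 2 ∑_{i,j} |(τ'(T₀))_{i j}|² / (p_i(T₀) + p_j(T₀)). -/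
open scoped InnerProductSpace

/-!
In the Schmidt basis the purification has real amplitudes `√pᵢ`, with velocities `pᵢ' / (2 √pᵢ)`.
Hence its velocity has squared norm `¼ ∑ pᵢ'² / pᵢ` and overlap `½ ∑ pᵢ'` with the purification;
the overlap vanishes because the total probability is conserved. The eigenbasis of the thermal
state does not move, so only the diagonal terms of its quantum Fisher information survive; they add
up to the classical Fisher information `∑ pᵢ'² / pᵢ` as well.
-/

section Definitions

variable (𝕜 : Type*) {ι E : Type*} [RCLike 𝕜] [NormedAddCommGroup E] [InnerProductSpace 𝕜 E]
  [Fintype ι]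

/-- The vector `∑ i, √(p i) • e i` with Schmidt weights `p`. When `e i = |i⟩ ⊗ |i⟩`, it is the
canonical purification of the diagonal density matrix with entries `p`. -/
noncomputable def schmidtVector (e : ι → E) (p : ι → ℝ) : E :=
  ∑ i, (√(p i) : 𝕜) • e i

/-- The velocity of `schmidtVector 𝕜 e` when the Schmidt weights pass through positive values `p`
with velocity `p'`. -/
noncomputable def schmidtVelocity (e : ι → E) (p p' : ι → ℝ) : E :=
  ∑ i, ((p' i / (2 * √(p i)) : ℝ) : 𝕜) • e i

/-- The quantum Fisher information of a family of pure states passing through the unit vector `ψ`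
with velocity `ψ'`. -/
noncomputable def pureQFI (ψ ψ' : E) : ℝ :=
  4 * (‖ψ'‖ ^ 2 - ‖⟪ψ', ψ⟫_𝕜‖ ^ 2)

variable {𝕜}

/-- The quantum Fisher information of a family of density matrices with velocity `τ'`, written in
an eigenbasis of the density matrix, whose eigenvalues are `p`. Terms with `p i + p j = 0`
contribute zero. -/
noncomputable def spectralQFI (p : ι → ℝ) (τ' : Matrix ι ι 𝕜) : ℝ :=
  2 * ∑ i, ∑ j, ‖τ' i j‖ ^ 2 / (p i + p j)

/-- The classical Fisher information of a family of distributions passing through `p` with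
velocity `p'`. Outcomes with `p i = 0` contribute zero. -/
noncomputable def fisherInformation (p p' : ι → ℝ) : ℝ :=
  ∑ i, p' i ^ 2 / p i

end Definitions

section Calculus

theorem hasDerivAt_ofReal_comp {𝕜 : Type*} [RCLike 𝕜] {f : ℝ → ℝ} {f' t : ℝ}
    (hf : HasDerivAt f f' t) :
    HasDerivAt (fun s => (f s : 𝕜)) (f' : 𝕜) t :=
  (RCLike.ofRealCLM (K := 𝕜)).hasFDerivAt.comp_hasDerivAt t hf

variable {𝕜 ι E : Type*} [RCLike 𝕜] {p : ℝ → ι → ℝ} {p' : ι → ℝ} {t : ℝ}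

theorem hasDerivAt_schmidtVector [Fintype ι] [NormedAddCommGroup E] [InnerProductSpace 𝕜 E]
    [NormedSpace ℝ E] [IsScalarTower ℝ 𝕜 E] (e : ι → E)
    (hp : ∀ i, HasDerivAt (fun s => p s i) (p' i) t) (hp₀ : ∀ i, p t i ≠ 0) :
    HasDerivAt (fun s => schmidtVector 𝕜 e (p s)) (schmidtVelocity 𝕜 e (p t) p') t :=
  HasDerivAt.fun_sum fun i _ => (hasDerivAt_ofReal_comp ((hp i).sqrt (hp₀ i))).smul_const (e i)

theorem hasDerivAt_diagonal_ofReal_apply [DecidableEq ι]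
    (hp : ∀ i, HasDerivAt (fun s => p s i) (p' i) t) (i j : ι) :
    HasDerivAt (fun s => Matrix.diagonal (fun k => (p s k : 𝕜)) i j)
      (Matrix.diagonal (fun k => (p' k : 𝕜)) i j) t := by
  obtain rfl | hij := eq_or_ne i j
  · simpa only [Matrix.diagonal_apply_eq] using hasDerivAt_ofReal_comp (hp i)
  · simpa only [Matrix.diagonal_apply_ne _ hij] using hasDerivAt_const t (0 : 𝕜)

end Calculus

section FisherInformation

variable {𝕜 ι E : Type*} [RCLike 𝕜] [NormedAddCommGroup E] [InnerProductSpace 𝕜 E] [Fintype ι]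
  {e : ι → E}

theorem inner_sum_ofReal_smul (he : Orthonormal 𝕜 e) (a b : ι → ℝ) :
    ⟪∑ i, (a i : 𝕜) • e i, ∑ i, (b i : 𝕜) • e i⟫_𝕜 = ((∑ i, a i * b i : ℝ) : 𝕜) := by
  simp only [he.inner_sum, RCLike.conj_ofReal, RCLike.ofReal_sum, RCLike.ofReal_mul]

theorem norm_sq_sum_ofReal_smul (he : Orthonormal 𝕜 e) (a : ι → ℝ) :
    ‖∑ i, (a i : 𝕜) • e i‖ ^ 2 = ∑ i, a i ^ 2 := by
  rw [norm_sq_eq_re_inner (𝕜 := 𝕜), inner_sum_ofReal_smul he, RCLike.ofReal_re]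
  simp only [sq]

theorem norm_sq_schmidtVelocity (he : Orthonormal 𝕜 e) {p : ι → ℝ} (hp : ∀ i, 0 ≤ p i)
    (p' : ι → ℝ) :
    ‖schmidtVelocity 𝕜 e p p'‖ ^ 2 = fisherInformation p p' / 4 := by
  rw [schmidtVelocity, norm_sq_sum_ofReal_smul he, fisherInformation, Finset.sum_div]
  refine Finset.sum_congr rfl fun i _ => ?_
  rw [div_pow, mul_pow, Real.sq_sqrt (hp i), div_div]
  ring

theorem inner_schmidtVelocity_schmidtVector (he : Orthonormal 𝕜 e) {p : ι → ℝ}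
    (hp : ∀ i, 0 < p i) (p' : ι → ℝ) :
    ⟪schmidtVelocity 𝕜 e p p', schmidtVector 𝕜 e p⟫_𝕜 = (((∑ i, p' i) / 2 : ℝ) : 𝕜) := by
  rw [schmidtVelocity, schmidtVector, inner_sum_ofReal_smul he, Finset.sum_div]
  congr 1
  refine Finset.sum_congr rfl fun i _ => ?_
  have := Real.sqrt_ne_zero'.mpr (hp i)
  field_simp

theorem pureQFI_schmidtVector (he : Orthonormal 𝕜 e) {p p' : ι → ℝ} (hp : ∀ i, 0 < p i)
    (hp' : ∑ i, p' i = 0) :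
    pureQFI 𝕜 (schmidtVector 𝕜 e p) (schmidtVelocity 𝕜 e p p') = fisherInformation p p' := by
  rw [pureQFI, norm_sq_schmidtVelocity he fun i => (hp i).le,
    inner_schmidtVelocity_schmidtVector he hp, hp', zero_div, RCLike.ofReal_zero, norm_zero]
  ring

theorem spectralQFI_diagonal [DecidableEq ι] (p p' : ι → ℝ) :
    spectralQFI p (Matrix.diagonal fun i => (p' i : 𝕜)) = fisherInformation p p' := by
  rw [spectralQFI, fisherInformation, Finset.mul_sum]
  refine Finset.sum_congr rfl fun i _ => ?_
  rw [Fintype.sum_eq_single i fun j hj => by simp [Matrix.diagonal_apply_ne' _ hj],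
    Matrix.diagonal_apply_eq, RCLike.norm_ofReal, sq_abs, ← two_mul]
  ring

theorem stmt_4_general [DecidableEq ι] [NormedSpace ℝ E] [IsScalarTower ℝ 𝕜 E]
    (he : Orthonormal 𝕜 e) {p : ℝ → ι → ℝ} {t : ℝ}
    (hdiff : ∀ i, DifferentiableAt ℝ (fun s => p s i) t) (hpos : ∀ i, 0 < p t i)
    (hsum : HasDerivAt (fun s => ∑ i, p s i) 0 t) :
    pureQFI 𝕜 (schmidtVector 𝕜 e (p t)) (deriv (fun s => schmidtVector 𝕜 e (p s)) t) =
      spectralQFI (p t)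
        (Matrix.of fun i j => deriv (fun s => Matrix.diagonal (fun k => (p s k : 𝕜)) i j) t) := by
  have hp : ∀ i, HasDerivAt (fun s => p s i) (deriv (fun s => p s i) t) t :=
    fun i => (hdiff i).hasDerivAt
  have total_velocity : ∑ i, deriv (fun s => p s i) t = 0 :=
    (HasDerivAt.fun_sum fun i _ => hp i).unique hsum
  have hτ' : (Matrix.of fun i j => deriv (fun s => Matrix.diagonal (fun k => (p s k : 𝕜)) i j) t) =
      Matrix.diagonal fun i => ((deriv (fun s => p s i) t : ℝ) : 𝕜) :=
    Matrix.ext fun i j => (hasDerivAt_diagonal_ofReal_apply hp i j).deriv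
  rw [(hasDerivAt_schmidtVector e hp fun i => (hpos i).ne').deriv, hτ',
    pureQFI_schmidtVector he hpos total_velocity, spectralQFI_diagonal]

end FisherInformation

section DoubledBasis

variable {𝕜 ι : Type*} [RCLike 𝕜] [Fintype ι] [DecidableEq ι]

theorem orthonormal_single_diag :
    Orthonormal 𝕜 fun i : ι => EuclideanSpace.single (i, i) (1 : 𝕜) :=
  EuclideanSpace.orthonormal_single.comp (fun i : ι => (i, i)) fun _ _ h => congrArg Prod.fst h

theorem schmidtVector_single_diag_apply (p : ι → ℝ) (i j : ι) :
    schmidtVector 𝕜 (fun k => EuclideanSpace.single (k, k) (1 : 𝕜)) p (i, j) =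
      if i = j then (√(p i) : 𝕜) else 0 := by
  obtain rfl | hij := eq_or_ne i j
  · simp [schmidtVector, WithLp.ofLp_sum, Finset.sum_apply, Pi.single_apply,
      RCLike.real_smul_eq_coe_mul]
  · have hne : ∀ k, (i, j) ≠ (k, k) := by grind
    simp [schmidtVector, hij, hne]

end DoubledBasis

/-- The pure-state QFI of the purification
`Ψ(T)_{(i,j)} = δ_{ij} √(p_i(T))` equals the QFI of the diagonal thermal state
`τ(T) = diagonal (p T)`:
`4(‖Ψ'(T₀)‖² − |⟨Ψ'(T₀), Ψ(T₀)⟩|²) = 2 ∑_{i,j} |(τ'(T₀))_{ij}|²/(p_i(T₀)+p_j(T₀))`. -/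
theorem stmt_4 {n : ℕ} (hn : 1 ≤ n) (p : ℝ → Fin n → ℝ) (T₀ : ℝ)
    (hdiff : ∀ i, DifferentiableAt ℝ (fun T => p T i) T₀)
    (hpos : ∀ᶠ T in nhds T₀, ∀ i, 0 < p T i)
    (hsum : ∀ᶠ T in nhds T₀, ∑ i, p T i = 1)
    (Ψ : ℝ → EuclideanSpace ℂ (Fin n × Fin n))
    (hΨ : ∀ T (i j : Fin n),
      Ψ T (i, j) = if i = j then (Real.sqrt (p T i) : ℂ) else 0)
    (τ : ℝ → Matrix (Fin n) (Fin n) ℂ)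
    (hτ : ∀ T, τ T = Matrix.diagonal (fun i => (p T i : ℂ)))
    (τ' : Matrix (Fin n) (Fin n) ℂ)
    (hτ' : ∀ i j, τ' i j = deriv (fun T => τ T i j) T₀) :
    4 * (‖deriv Ψ T₀‖ ^ 2 - ‖⟪deriv Ψ T₀, Ψ T₀⟫_ℂ‖ ^ 2) =
      2 * ∑ i, ∑ j, ‖τ' i j‖ ^ 2 / (p T₀ i + p T₀ j) := by
  have hΨ' : Ψ = fun T => schmidtVector ℂ (fun i => EuclideanSpace.single (i, i) 1) (p T) := by
    ext T ⟨i, j⟩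
    exact (hΨ T i j).trans (schmidtVector_single_diag_apply (p T) i j).symm
  have hτ'' : τ' = Matrix.of fun i j =>
      deriv (fun T => Matrix.diagonal (fun k => (p T k : ℂ)) i j) T₀ := by
    ext i j
    simp only [hτ', hτ, Matrix.of_apply]
  rw [hΨ', hτ'']
  exact stmt_4_general orthonormal_single_diag hdiff hpos.self_of_nhds
    ((hasDerivAt_const T₀ 1).congr_of_eventuallyEq hsum)
end

section
/- Let a, b, c ∈ ℝ and let U ∈ Matrix (Fin 2 × Fin 2) (Fin 2 × Fin 2) ℂ be the matrix with entries U_{(0,0),(0,0)} = exp(i a), U_{(0,1),(1,0)} = exp(i b), U_{(1,0),(0,1)} = exp(i b), U_{(1,1),(1,1)} = exp(i c), and all other entries 0. Then: (i) U is unitary, i.e., Uᴴ * U = 1; (ii) U commutes with H = σ_z ⊗ₖ I₂ + I₂ ⊗ₖ σ_z; and (iii) for every ρ ∈ Matrix (Fin 2) (Fin 2) ℂ with Matrix.trace ρ = 1 and every β₀, β₁ ∈ ℝ, the partial trace over the second (environment) factor of U * (ρ ⊗ₖ !![(β₀:ℂ), 0; 0, β₁]) * Uᴴ equals !![(β₀:ℂ),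 0; 0, β₁]. -/
open Kronecker Matrix

/-- The Pauli-z matrix. -/
def pauliZ : Matrix (Fin 2) (Fin 2) ℂ := !![1, 0; 0, -1]

/-- The total Hamiltonian `H = σ_z ⊗ I + I ⊗ σ_z`. -/
def Htot : Matrix (Fin 2 × Fin 2) (Fin 2 × Fin 2) ℂ :=
  pauliZ ⊗ₖ (1 : Matrix (Fin 2) (Fin 2) ℂ) +
    (1 : Matrix (Fin 2) (Fin 2) ℂ) ⊗ₖ pauliZ

/-!
Write `U = D S`, where `S` swaps the two tensor factors and `D` is the diagonal matrix of phases.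
Conjugation by `S` exchanges the factors of a Kronecker product and `D` commutes with every diagonal
matrix, so `U` commutes with any diagonal Hamiltonian whose energies are invariant under the swap.
For diagonal `σ` we have `U (ρ ⊗ σ) Uᴴ = D (σ ⊗ ρ) Dᴴ`. Its partial trace only involves the entries
at `((s, k), (t, k))`, which vanish unless `s = t`; there each phase meets its own conjugate and
cancels.
-/

section

variable {m n R : Type*}

/-- The partial trace of a matrix on a bipartite system over its second factor. -/
def partialTraceRight [Fintype n] [AddCommMonoid R] (M : Matrix (m × n) (m × n) R) :
    Matrix m m R :=
  of fun s t => ∑ k, M (s, k) (t, k)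

theorem partialTraceRight_apply [Fintype n] [AddCommMonoid R] (M : Matrix (m × n) (m × n) R)
    (s t : m) : partialTraceRight M s t = ∑ k, M (s, k) (t, k) :=
  rfl

theorem partialTraceRight_phase_conj_kronecker [Fintype m] [Fintype n] [DecidableEq m]
    [DecidableEq n] [CommSemiring R] [StarRing R] {φ : m × n → R} (hφ : ∀ x, φ x ∈ unitary R)
    (d : m → R) (B : Matrix n n R) :
    partialTraceRight (diagonal φ * (diagonal d ⊗ₖ B) * diagonal (star φ)) =
      B.trace • diagonal d := by
  ext s t
  simp only [partialTraceRight_apply, mul_diagonal, diagonal_mul, kroneckerMap_apply, Pi.star_apply,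
    Matrix.smul_apply, smul_eq_mul]
  obtain rfl | hst := eq_or_ne s t
  · have phase_cancel (k : n) : φ (s, k) * (d s * B k k) * star (φ (s, k)) = B k k * d s :=
      calc φ (s, k) * (d s * B k k) * star (φ (s, k))
        _ = φ (s, k) * star (φ (s, k)) * (B k k * d s) := by ring
        _ = B k k * d s := by rw [Unitary.mul_star_self_of_mem (hφ (s, k)), one_mul]
    simp only [diagonal_apply_eq, phase_cancel, ← Finset.sum_mul, trace, diag_apply]
  · simp [diagonal_apply_ne d hst]

/-- The swap of two copies of a system followed by the diagonal matrix of phases `φ`, encoded as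
`diagonal φ` with its columns permuted by `Prod.swap`. -/
def phasedSwap [DecidableEq n] [Zero R] (φ : n × n → R) : Matrix (n × n) (n × n) R :=
  (diagonal φ).submatrix id Prod.swap

theorem phasedSwap_apply [DecidableEq n] [Zero R] (φ : n × n → R) (x y : n × n) :
    phasedSwap φ x y = if x = y.swap then φ x else 0 :=
  diagonal_apply ..

theorem phasedSwap_fin_two_apply [Zero R] (φ : Fin 2 × Fin 2 → R) (x y : Fin 2 × Fin 2) :
    phasedSwap φ x y =
      if x = (0, 0) ∧ y = (0, 0) then φ (0, 0)
      else if x = (0, 1) ∧ y = (1, 0) then φ (0, 1)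
      else if x = (1, 0) ∧ y = (0, 1) then φ (1, 0)
      else if x = (1, 1) ∧ y = (1, 1) then φ (1, 1)
      else 0 := by
  rw [phasedSwap_apply]
  obtain ⟨i, j⟩ := x
  obtain ⟨k, l⟩ := y
  fin_cases i <;> fin_cases j <;> fin_cases k <;> fin_cases l <;> simp

variable [Fintype n] [DecidableEq n]

theorem phasedSwap_mul [NonUnitalNonAssocSemiring R] (φ : n × n → R) (M : Matrix (n × n) m R) :
    phasedSwap φ * M = diagonal φ * M.submatrix Prod.swap id := by
  simpa [phasedSwap] using
    submatrix_mul_equiv (diagonal φ) (M.submatrix Prod.swap id) id (Equiv.prodComm n n) id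

theorem mul_conjTranspose_phasedSwap [NonUnitalNonAssocSemiring R] [StarRing R] (φ : n × n → R)
    (M : Matrix m (n × n) R) :
    M * (phasedSwap φ)ᴴ = M.submatrix id Prod.swap * diagonal (star φ) := by
  simpa [phasedSwap] using
    submatrix_mul_equiv (M.submatrix id Prod.swap) (diagonal (star φ)) id
      (Equiv.prodComm n n) id

theorem phasedSwap_conj_kronecker [CommSemiring R] [StarRing R] (φ : n × n → R)
    (A B : Matrix n n R) :
    phasedSwap φ * (A ⊗ₖ B) * (phasedSwap φ)ᴴ =
      diagonal φ * (B ⊗ₖ A) * diagonal (star φ) := by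
  have swap_kronecker : (A ⊗ₖ B).submatrix Prod.swap Prod.swap = B ⊗ₖ A :=
    ext fun _ _ => mul_comm _ _
  rw [mul_assoc, mul_conjTranspose_phasedSwap, ← mul_assoc, phasedSwap_mul, submatrix_submatrix,
    Function.id_comp, Function.comp_id, swap_kronecker]

theorem phasedSwap_mem_unitaryGroup [CommRing R] [StarRing R] {φ : n × n → R}
    (hφ : ∀ x, φ x ∈ unitary R) : phasedSwap φ ∈ unitaryGroup (n × n) R := by
  rw [mem_unitaryGroup_iff, star_eq_conjTranspose]
  calc phasedSwap φ * (phasedSwap φ)ᴴ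
      = diagonal φ * diagonal (star φ) := by
        simpa using phasedSwap_conj_kronecker φ (1 : Matrix n n R) 1
    _ = 1 := by simp [hφ]

theorem phasedSwap_mul_diagonal [CommSemiring R] (φ d : n × n → R) :
    phasedSwap φ * diagonal d = diagonal (d ∘ Prod.swap) * phasedSwap φ := by
  ext x y
  simp only [mul_diagonal, diagonal_mul, phasedSwap_apply]
  split_ifs with h
  · simp [h, mul_comm]
  · simp

theorem commute_phasedSwap_diagonal [CommSemiring R] (φ : n × n → R) {d : n × n → R}
    (hd : d ∘ Prod.swap = d) : Commute (phasedSwap φ) (diagonal d) := by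
  rw [Commute, SemiconjBy, phasedSwap_mul_diagonal, hd]

end

theorem exp_I_mul_ofReal_mem_unitary (θ : ℝ) : Complex.exp (Complex.I * θ) ∈ unitary ℂ := by
  rw [Unitary.mem_iff_star_mul_self, Complex.star_def, ← Complex.exp_conj, ← Complex.exp_add]
  simp

theorem Htot_eq_diagonal :
    Htot = diagonal fun x => (![1, -1] : Fin 2 → ℂ) x.1 + (![1, -1] : Fin 2 → ℂ) x.2 := by
  have pauliZ_eq : pauliZ = diagonal ![1, -1] := by simp [pauliZ, diagonal_fin_two]
  simp only [Htot, pauliZ_eq, ← diagonal_one, diagonal_kronecker_diagonal, diagonal_add, mul_one,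
    one_mul]

theorem stmt_14_general {n R : Type*} [Fintype n] [DecidableEq n] [CommRing R] [StarRing R]
    {φ : n × n → R} (hφ : ∀ x, φ x ∈ unitary R) :
    (phasedSwap φ)ᴴ * phasedSwap φ = 1 ∧
    (∀ E : n × n → R, E ∘ Prod.swap = E → Commute (phasedSwap φ) (diagonal E)) ∧
    ∀ (ρ : Matrix n n R) (p : n → R),
      partialTraceRight (phasedSwap φ * (ρ ⊗ₖ diagonal p) * (phasedSwap φ)ᴴ) =
        ρ.trace • diagonal p := by
  refine ⟨mem_unitaryGroup_iff'.mp (phasedSwap_mem_unitaryGroup hφ),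
    fun E hE => commute_phasedSwap_diagonal φ hE, fun ρ p => ?_⟩
  rw [phasedSwap_conj_kronecker, partialTraceRight_phase_conj_kronecker hφ]

/-- The phased-SWAP matrix `U` (with entries `e^{ia}, e^{ib},
e^{ib}, e^{ic}` at positions `((0,0),(0,0)); ((0,1),(1,0)); ((1,0),(0,1));
((1,1),(1,1))` and `0` elsewhere) is unitary, commutes with
`H = σ_z ⊗ I + I ⊗ σ_z`, and for any trace-one probe state `ρ` and any diagonal
environment state `diag(β₀, β₁)`, the partial trace over the environment of
`U (ρ ⊗ diag(β₀,β₁)) Uᴴ` equals `diag(β₀, β₁)`. -/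
theorem stmt_14 (a b c : ℝ) (U : Matrix (Fin 2 × Fin 2) (Fin 2 × Fin 2) ℂ)
    (hU : ∀ x y : Fin 2 × Fin 2, U x y =
      if x = ((0 : Fin 2), (0 : Fin 2)) ∧ y = ((0 : Fin 2), (0 : Fin 2)) then
        Complex.exp (Complex.I * a)
      else if x = ((0 : Fin 2), (1 : Fin 2)) ∧ y = ((1 : Fin 2), (0 : Fin 2)) then
        Complex.exp (Complex.I * b)
      else if x = ((1 : Fin 2), (0 : Fin 2)) ∧ y = ((0 : Fin 2), (1 : Fin 2)) then
        Complex.exp (Complex.I * b)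
      else if x = ((1 : Fin 2), (1 : Fin 2)) ∧ y = ((1 : Fin 2), (1 : Fin 2)) then
        Complex.exp (Complex.I * c)
      else 0) :
    Uᴴ * U = 1 ∧ U * Htot = Htot * U ∧
    ∀ ρ : Matrix (Fin 2) (Fin 2) ℂ, Matrix.trace ρ = 1 → ∀ β₀ β₁ : ℝ,
      ∀ s t : Fin 2,
        ∑ k, (U * (ρ ⊗ₖ !![(β₀ : ℂ), 0; 0, (β₁ : ℂ)]) * Uᴴ) (s, k) (t, k) =
          !![(β₀ : ℂ), 0; 0, (β₁ : ℂ)] s t := by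
  let φ (x : Fin 2 × Fin 2) : ℂ := Complex.exp (Complex.I * (!![a, b; b, c] x.1 x.2 : ℝ))
  obtain rfl : U = phasedSwap φ := by
    ext x y
    simp [hU, phasedSwap_fin_two_apply, φ]
  obtain ⟨unitary_U, commute_U, partialTrace_U⟩ :=
    stmt_14_general fun x => exp_I_mul_ofReal_mem_unitary (!![a, b; b, c] x.1 x.2)
  refine ⟨unitary_U, ?_, fun ρ hρ β₀ β₁ s t => ?_⟩
  · rw [Htot_eq_diagonal]
    exact commute_U _ (funext fun _ => add_comm _ _)
  · have encoded := partialTrace_U ρ ![(β₀ : ℂ), β₁]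
    rw [hρ, one_smul, diagonal_fin_two] at encoded
    exact congr_fun₂ encoded s t
end

section
/- Let λ₁, λ₂, λ₃, λ₄, λ₅ ∈ ℝ. In EuclideanSpace ℂ (Fin 2 × Fin 2), let e₀₀, e₀₁, e₁₀, e₁₁ denote the standard basis vectors at indices (0,0), (0,1), (1,0), (1,1), and set Φ₁ = sin(λ₅) • e₁₀ + cos(λ₅) • e₀₁ and Φ₂ = cos(λ₅) • e₁₀ − sin(λ₅) • e₀₁. Let U = exp(−i λ₁) • |e₀₀⟩⟨e₀₀| + exp(−i λ₂) • |Φ₁⟩⟨Φ₁| + exp(−i λ₃) • |Φ₂⟩⟨Φ₂| + exp(−i λ₄) • |e₁₁⟩⟨e₁₁|, regarded as a matrix in Matrix (Fin 2 × Fin 2) (Fin 2 × Fin 2) ℂ. Then U is unitary (Uᴴ * U = 1) and U commutes with H = σ_z ⊗ₖ I₂ + I₂ ⊗ₖ σ_z. -/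
open Kronecker Matrix

/-- The outer product `|v⟩⟨w|` of two vectors, as a matrix. -/
noncomputable def outer (v w : EuclideanSpace ℂ (Fin 2 × Fin 2)) :
    Matrix (Fin 2 × Fin 2) (Fin 2 × Fin 2) ℂ :=
  Matrix.of fun i j => v i * star (w j)

/-!
The four vectors `Φ₁, Φ₂, |00⟩, |11⟩` form an orthonormal basis, since `(Φ₁, Φ₂)` is obtained from
`(|10⟩, |01⟩)` by an orthogonal change of basis; a matrix that is diagonal in an orthonormal basis
with phases on the diagonal is unitary. Each of these vectors is also an eigenvector of the
Hermitian matrix `H`, because `|10⟩` and `|01⟩` share the energy `0`. So every projector in the sum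
defining `U` commutes with `H`.
-/

section General

variable {R ι n : Type*} [CommSemiring R] [StarRing R]

theorem commute_vecMulVec_star_of_mulVec_eq_smul [Fintype n] {A : Matrix n n R}
    (hA : A.IsHermitian) {v : n → R} {μ : R} (hμ : IsSelfAdjoint μ) (hv : A *ᵥ v = μ • v) :
    Commute (vecMulVec v (star v)) A := by
  have hv' : star v ᵥ* A = μ • star v := by
    rw [← hA.eq, ← star_mulVec, hv, star_smul, hμ.star_eq]
  rw [commute_iff_eq, vecMulVec_mul, mul_vecMulVec, hv, hv', vecMulVec_smul, smul_vecMulVec]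

theorem sum_smul_vecMulVec_star_eq_mul_diagonal_mul [Fintype ι] [DecidableEq ι]
    (V : Matrix n ι R) (d : ι → R) :
    ∑ k, d k • vecMulVec (V.col k) (star (V.col k)) = V * diagonal d * Vᴴ := by
  ext i j
  rw [Matrix.sum_apply, mul_apply]
  refine Finset.sum_congr rfl fun k _ => ?_
  rw [mul_diagonal, conjTranspose_apply, Matrix.smul_apply, vecMulVec_apply, Pi.star_apply,
    smul_eq_mul, col_apply, col_apply]
  ring

theorem sum_smul_vecMulVec_star_mem_unitaryGroup {𝕜 : Type*} [RCLike 𝕜] [Fintype ι]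
    [Fintype n] [DecidableEq n] {v : ι → EuclideanSpace 𝕜 n} (hv : Orthonormal 𝕜 v)
    (hcard : Fintype.card ι = Fintype.card n) {d : ι → 𝕜} (hd : ∀ k, ‖d k‖ = 1) :
    ∑ k, d k • vecMulVec (v k).ofLp (star (v k).ofLp) ∈ unitaryGroup n 𝕜 := by
  classical
  let V : Matrix n ι 𝕜 := of fun i k => v k i
  have hVV : Vᴴ * V = 1 := by
    rw [← gram_eq_one_iff_orthonormal.mpr hv]
    exact (gram_eq_conjTranspose_mul (EuclideanSpace.basisFun n 𝕜) v).symm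
  have hVV' : V * Vᴴ = 1 := (mul_eq_one_comm_of_card_eq _ _ _ hcard).mp hVV
  have hdd : diagonal (star d) * diagonal d = 1 := by
    rw [diagonal_mul_diagonal, ← diagonal_one]
    congr 1
    ext k
    simp [RCLike.conj_mul, hd k]
  have hsum : ∑ k, d k • vecMulVec (v k).ofLp (star (v k).ofLp) = V * diagonal d * Vᴴ :=
    sum_smul_vecMulVec_star_eq_mul_diagonal_mul V d
  rw [hsum, mem_unitaryGroup_iff', star_eq_conjTranspose]
  calc (V * diagonal d * Vᴴ)ᴴ * (V * diagonal d * Vᴴ)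
      = V * (diagonal (star d) * (Vᴴ * V) * diagonal d) * Vᴴ := by
        simp only [conjTranspose_mul, conjTranspose_conjTranspose, diagonal_conjTranspose,
          Matrix.mul_assoc]
    _ = 1 := by rw [hVV, Matrix.mul_one, hdd, Matrix.mul_one, hVV']

end General

theorem orthonormal_vecCons_rotate {𝕜 E : Type*} [RCLike 𝕜] [NormedAddCommGroup E]
    [InnerProductSpace 𝕜 E] {m : ℕ} {x y : E} {w : Fin m → E}
    (h : Orthonormal 𝕜 (vecCons x (vecCons y w))) {a b : 𝕜} (hab : ‖a‖ ^ 2 + ‖b‖ ^ 2 = 1) :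
    Orthonormal 𝕜 (vecCons (a • x + b • y) (vecCons (star b • x - star a • y) w)) := by
  simp only [orthonormal_vecCons_iff, Fin.forall_fin_succ, cons_val_zero, cons_val_succ] at h ⊢
  obtain ⟨hx, ⟨hxy, hxw⟩, hy, hyw, hw⟩ := h
  have hyx : inner 𝕜 y x = 0 := inner_eq_zero_symm.mp hxy
  have norm_combination {c d : 𝕜} (hcd : ‖c‖ ^ 2 + ‖d‖ ^ 2 = 1) : ‖c • x + d • y‖ = 1 := by
    have hxy' : inner 𝕜 (c • x) (d • y) = 0 := by
      rw [inner_smul_left, inner_smul_right, hxy, mul_zero, mul_zero]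
    have hpyth := norm_add_sq_eq_norm_sq_add_norm_sq_of_inner_eq_zero _ _ hxy'
    rw [norm_smul, norm_smul, hx, hy, mul_one, mul_one, ← sq, ← sq, ← sq, hcd] at hpyth
    exact (pow_eq_one_iff_of_nonneg (norm_nonneg _) two_ne_zero).mp hpyth
  refine ⟨norm_combination hab, ⟨?_, fun i => ?_⟩, ?_, fun i => ?_, hw⟩
  · simp [inner_add_left, inner_sub_right, inner_smul_left, inner_smul_right, hxy, hyx,
      hx, hy, mul_comm]
  · simp [inner_add_left, inner_smul_left, hxw, hyw]
  · rw [sub_eq_add_neg, ← neg_smul]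
    exact norm_combination (by rw [norm_neg, norm_star, norm_star, add_comm, hab])
  · simp [inner_sub_left, inner_smul_left, hxw, hyw]

section Hamiltonian

/-- The eigenvalue of `Htot` at the computational basis vector `|p.1 p.2⟩`: each qubit contributes
its `σ_z`-eigenvalue, `1` for `|0⟩` and `-1` for `|1⟩`. -/
def energy (p : Fin 2 × Fin 2) : ℝ := ![1, -1] p.1 + ![1, -1] p.2

theorem Htot_eq_diagonal_s15 : Htot = diagonal fun p => (energy p : ℂ) := by
  have hσ : pauliZ = diagonal ![1, -1] := by
    ext i j
    fin_cases i <;> fin_cases j <;> rfl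
  rw [Htot, hσ, ← diagonal_one, diagonal_kronecker_diagonal, diagonal_kronecker_diagonal,
    diagonal_add]
  congr 1
  ext ⟨i, j⟩
  fin_cases i <;> fin_cases j <;> simp [energy]

theorem isHermitian_Htot : Htot.IsHermitian := by
  rw [Htot_eq_diagonal_s15, isHermitian_diagonal_iff]
  exact fun p => Complex.conj_ofReal _

theorem Htot_mulVec_single (p : Fin 2 × Fin 2) :
    Htot *ᵥ (EuclideanSpace.single p (1 : ℂ)).ofLp =
      (energy p : ℂ) • (EuclideanSpace.single p (1 : ℂ)).ofLp := by
  rw [Htot_eq_diagonal_s15, PiLp.ofLp_single, diagonal_mulVec_single, ← Pi.single_smul', smul_eq_mul]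

theorem Htot_mulVec_smul_single_add_smul_single {p q : Fin 2 × Fin 2} (hpq : energy p = energy q)
    (a b : ℂ) :
    Htot *ᵥ (a • EuclideanSpace.single p (1 : ℂ) + b • EuclideanSpace.single q (1 : ℂ)).ofLp =
      (energy p : ℂ) •
        (a • EuclideanSpace.single p (1 : ℂ) + b • EuclideanSpace.single q (1 : ℂ)).ofLp := by
  rw [WithLp.ofLp_add, WithLp.ofLp_smul, WithLp.ofLp_smul, mulVec_add, mulVec_smul, mulVec_smul,
    Htot_mulVec_single, Htot_mulVec_single, ← hpq, smul_add, smul_comm a, smul_comm b]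

theorem commute_outer_Htot_of_mulVec_eq_smul {v : EuclideanSpace ℂ (Fin 2 × Fin 2)} {E : ℝ}
    (hv : Htot *ᵥ v.ofLp = (E : ℂ) • v.ofLp) : Commute (outer v v) Htot :=
  commute_vecMulVec_star_of_mulVec_eq_smul isHermitian_Htot (Complex.conj_ofReal E) hv

end Hamiltonian

section MixedBasis

/-- The eigenbasis `(Φ₁, Φ₂, |00⟩, |11⟩)` of `Htot` in which `U` is diagonal, where `θ` is the angle
mixing `|10⟩` and `|01⟩`. The mixed pair is listed first, so that `orthonormal_vecCons_rotate`
applies. -/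
noncomputable def mixedBasis (θ : ℝ) : Fin 4 → EuclideanSpace ℂ (Fin 2 × Fin 2) :=
  ![(Real.sin θ : ℂ) • EuclideanSpace.single (1, 0) 1
      + (Real.cos θ : ℂ) • EuclideanSpace.single (0, 1) 1,
    (Real.cos θ : ℂ) • EuclideanSpace.single (1, 0) 1
      - (Real.sin θ : ℂ) • EuclideanSpace.single (0, 1) 1,
    EuclideanSpace.single (0, 0) 1,
    EuclideanSpace.single (1, 1) 1]

theorem orthonormal_mixedBasis (θ : ℝ) : Orthonormal ℂ (mixedBasis θ) := by
  have hsingle : Orthonormal ℂ (![EuclideanSpace.single (1, 0) 1, EuclideanSpace.single (0, 1) 1,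
      EuclideanSpace.single (0, 0) 1, EuclideanSpace.single (1, 1) 1] :
        Fin 4 → EuclideanSpace ℂ (Fin 2 × Fin 2)) := by
    have hinj : Function.Injective (![(1, 0), (0, 1), (0, 0), (1, 1)] : Fin 4 → Fin 2 × Fin 2) := by
      decide
    convert (EuclideanSpace.orthonormal_single (𝕜 := ℂ)).comp _ hinj using 1
    ext1 k
    fin_cases k <;> rfl
  have hnorm : ‖(Real.sin θ : ℂ)‖ ^ 2 + ‖(Real.cos θ : ℂ)‖ ^ 2 = 1 := by
    simp only [Complex.norm_real, Real.norm_eq_abs, sq_abs, Real.sin_sq_add_cos_sq]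
  have hrot := orthonormal_vecCons_rotate hsingle hnorm
  rwa [Complex.star_def, Complex.conj_ofReal, Complex.conj_ofReal] at hrot

theorem Htot_mulVec_mixedBasis (θ : ℝ) (k : Fin 4) :
    Htot *ᵥ (mixedBasis θ k).ofLp = ((![0, 0, 2, -2] k : ℝ) : ℂ) • (mixedBasis θ k).ofLp := by
  have h10 : energy (1, 0) = 0 := by simp [energy]
  have h01 : energy (0, 1) = 0 := by simp [energy]
  have h00 : energy (0, 0) = 2 := by norm_num [energy]
  have h11 : energy (1, 1) = -2 := by norm_num [energy]
  have hmix (a b : ℂ) := Htot_mulVec_smul_single_add_smul_single (h10.trans h01.symm) a b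
  rw [h10] at hmix
  fin_cases k
  · exact hmix _ _
  · have hmix_sub := hmix (Real.cos θ) (-Real.sin θ)
    rw [neg_smul, ← sub_eq_add_neg] at hmix_sub
    exact hmix_sub
  · exact h00 ▸ Htot_mulVec_single (0, 0)
  · exact h11 ▸ Htot_mulVec_single (1, 1)

end MixedBasis

theorem norm_exp_neg_I_mul_ofReal (x : ℝ) : ‖Complex.exp (-(Complex.I * x))‖ = 1 := by
  simpa using Complex.norm_exp_I_mul_ofReal (-x)

/-- The general energy-conserving two-qubit unitary
`U = e^{−iλ₁}|00⟩⟨00| + e^{−iλ₂}|Φ₁⟩⟨Φ₁| + e^{−iλ₃}|Φ₂⟩⟨Φ₂| + e^{−iλ₄}|11⟩⟨11|`,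
with `Φ₁ = sin λ₅ |10⟩ + cos λ₅ |01⟩` and `Φ₂ = cos λ₅ |10⟩ − sin λ₅ |01⟩`, is
unitary and commutes with `H = σ_z ⊗ I + I ⊗ σ_z`. -/
theorem stmt_15 (l₁ l₂ l₃ l₄ l₅ : ℝ)
    (e₀₀ e₀₁ e₁₀ e₁₁ Φ₁ Φ₂ : EuclideanSpace ℂ (Fin 2 × Fin 2))
    (he₀₀ : e₀₀ = EuclideanSpace.single ((0 : Fin 2), (0 : Fin 2)) 1)
    (he₀₁ : e₀₁ = EuclideanSpace.single ((0 : Fin 2), (1 : Fin 2)) 1)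
    (he₁₀ : e₁₀ = EuclideanSpace.single ((1 : Fin 2), (0 : Fin 2)) 1)
    (he₁₁ : e₁₁ = EuclideanSpace.single ((1 : Fin 2), (1 : Fin 2)) 1)
    (hΦ₁ : Φ₁ = (Real.sin l₅ : ℂ) • e₁₀ + (Real.cos l₅ : ℂ) • e₀₁)
    (hΦ₂ : Φ₂ = (Real.cos l₅ : ℂ) • e₁₀ - (Real.sin l₅ : ℂ) • e₀₁)
    (U : Matrix (Fin 2 × Fin 2) (Fin 2 × Fin 2) ℂ)
    (hU : U = Complex.exp (-(Complex.I * l₁)) • outer e₀₀ e₀₀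
        + Complex.exp (-(Complex.I * l₂)) • outer Φ₁ Φ₁
        + Complex.exp (-(Complex.I * l₃)) • outer Φ₂ Φ₂
        + Complex.exp (-(Complex.I * l₄)) • outer e₁₁ e₁₁) :
    Uᴴ * U = 1 ∧ U * Htot = Htot * U := by
  have hsum : U = ∑ k, Complex.exp (-(Complex.I * (![l₂, l₃, l₁, l₄] k : ℝ))) •
      outer (mixedBasis l₅ k) (mixedBasis l₅ k) := by
    subst he₀₀ he₀₁ he₁₀ he₁₁ hΦ₁ hΦ₂
    rw [hU, Fin.sum_univ_four]
    simp only [mixedBasis, cons_val]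
    abel
  rw [hsum]
  constructor
  · exact mem_unitaryGroup_iff'.mp <| sum_smul_vecMulVec_star_mem_unitaryGroup
      (orthonormal_mixedBasis l₅) (by simp) fun k => norm_exp_neg_I_mul_ofReal _
  · exact Commute.sum_left _ _ _ fun k _ =>
      (commute_outer_Htot_of_mulVec_eq_smul (Htot_mulVec_mixedBasis l₅ k)).smul_left _
end
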